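/- Fix a real p with 0 < p ≤ 1 and q = 1 − p, and let n ≥ 2 be an integer. Then Σ_{w ∈ (ℤ⁺)ⁿ} P(w)·sv(w) = p²·(1/(1−q²) − 1/(1−q³))·(n−2), where the sum over all words w of length n converges absolutely. In other words, the expected number of symmetric valleys in a sample of n geometric random variables is p²(1/(1−q²) − 1/(1−q³))(n−2). -/

import Mathlib

/-- The indices (0-based) of symmetric valleys of a list of naturals:
`i` is a symmetric valley if `L i > L (i+1)` and `L i = L (i+2)`. -/
def symValleyIdx (L : List ℕ) : Finset ℕ :=
  (Finset.range L.length).filter (fun i =>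
    i + 2 < L.length ∧ L.getD i 0 > L.getD (i+1) 0 ∧ L.getD i 0 = L.getD (i+2) 0)

/-- `sv w`: the number of symmetric valleys of `w`. -/
def svL (L : List ℕ) : ℕ := (symValleyIdx L).card

/-- The probability of the word `w` of length `n` with i.i.d. geometric letters:
`P(w) = ∏_{i} p·q^{wᵢ−1}`. -/
def wordP (p q : ℝ) {n : ℕ} (w : Fin n → ℕ+) : ℝ :=
  ∏ i : Fin n, p * q ^ ((w i : ℕ) - 1)

/-!
By linearity of expectation, `sv` is the sum over the `n - 2` windows of three consecutive letters
of the indicator that the window is a symmetric valley. The letters outside a window sum out to `1`,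
so every window contributes the probability that three independent letters form a symmetric valley.
Such triples are `(b + d + 1, b, b + d + 1)` with `b ≥ 1` and `d ≥ 0`, which turns that probability
into a product of geometric series with ratios `q ^ 2` (in `d`) and `q ^ 3` (in `b`).
-/

theorem hasSum_mul_of_summable_norm {R ι κ : Type*} [NormedRing R] {f : ι → R} {g : κ → R}
    {s t : R} (hf : HasSum f s) (hf_norm : Summable fun i => ‖f i‖) (hg : HasSum g t)
    (hg_norm : Summable fun j => ‖g j‖) :
    HasSum (fun x : ι × κ => f x.1 * g x.2) (s * t) :=
  hf.mul hg (summable_mul_of_summable_norm' hf_norm hf.summable hg_norm hg.summable)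

section IndependentLetters

variable {R : Type*} [NormedCommRing R]

theorem hasSum_pi_fin_prod_and_summable_norm {n : ℕ} {α : Fin n → Type*} {f : ∀ i, α i → R}
    {s : Fin n → R} (hf : ∀ i, HasSum (f i) (s i)) (hf_norm : ∀ i, Summable fun a => ‖f i a‖) :
    HasSum (fun w : ∀ i, α i => ∏ i, f i (w i)) (∏ i, s i) ∧
      Summable fun w : ∀ i, α i => ‖∏ i, f i (w i)‖ := by
  induction n with
  | zero => simp [Summable.of_finite]
  | succ n ih =>
    obtain ⟨hsum, hnorm⟩ := ih (fun i => hf i.succ) fun i => hf_norm i.succ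
    rw [← (Fin.consEquiv α).hasSum_iff, ← (Fin.consEquiv α).summable_iff]
    simp only [Function.comp_def, Fin.prod_univ_succ, Fin.consEquiv_apply, Fin.cons_zero,
      Fin.cons_succ]
    have hprod := hasSum_mul_of_summable_norm (hf 0) (hf_norm 0) hsum hnorm
    have hprod_norm := (hf_norm 0).mul_norm hnorm
    exact ⟨hprod, hprod_norm⟩

theorem hasSum_pi_prod_and_summable_norm {ι : Type*} [Fintype ι] {α : ι → Type*}
    {f : ∀ i, α i → R} {s : ι → R} (hf : ∀ i, HasSum (f i) (s i))
    (hf_norm : ∀ i, Summable fun a => ‖f i a‖) :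
    HasSum (fun w : ∀ i, α i => ∏ i, f i (w i)) (∏ i, s i) ∧
      Summable fun w : ∀ i, α i => ‖∏ i, f i (w i)‖ := by
  let e := (Fintype.equivFin ι).symm
  rw [← (Equiv.piCongrLeft α e).hasSum_iff, ← (Equiv.piCongrLeft α e).summable_iff,
    ← e.prod_comp]
  simpa only [Function.comp_def, ← e.prod_comp, Equiv.piCongrLeft_apply_apply] using
    hasSum_pi_fin_prod_and_summable_norm (fun j => hf (e j)) fun j => hf_norm (e j)

variable {α : Type*} {μ : α → R}

theorem hasSum_prod_mul_comp_inl {ι κ : Type*} [Fintype ι] [Fintype κ]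
    (hμ : HasSum μ 1) (hμ_norm : Summable fun a => ‖μ a‖) {g : (ι → α) → R} {s : R}
    (hg : HasSum (fun u : ι → α => (∏ i, μ (u i)) * g u) s)
    (hg_norm : Summable fun u : ι → α => ‖(∏ i, μ (u i)) * g u‖) :
    HasSum (fun w : ι ⊕ κ → α => (∏ k, μ (w k)) * g (w ∘ Sum.inl)) s := by
  obtain ⟨hrest, hrest_norm⟩ :=
    hasSum_pi_prod_and_summable_norm (ι := κ) (fun _ => hμ) fun _ => hμ_norm
  have hprod := hasSum_mul_of_summable_norm hg hg_norm hrest hrest_norm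
  rw [Finset.prod_const_one, mul_one] at hprod
  rw [← (Equiv.sumArrowEquivProdArrow ι κ α).symm.hasSum_iff]
  convert hprod using 2 with x
  simp only [Function.comp_apply, Fintype.prod_sum_type]
  exact mul_right_comm _ _ _

theorem hasSum_prod_mul_comp_embedding {ι κ : Type*} [Fintype ι] [Fintype κ] (e : ι ↪ κ)
    (hμ : HasSum μ 1) (hμ_norm : Summable fun a => ‖μ a‖) {g : (ι → α) → R} {s : R}
    (hg : HasSum (fun u : ι → α => (∏ i, μ (u i)) * g u) s)
    (hg_norm : Summable fun u : ι → α => ‖(∏ i, μ (u i)) * g u‖) :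
    HasSum (fun w : κ → α => (∏ k, μ (w k)) * g (w ∘ e)) s := by
  classical
  let φ : ι ⊕ {k // k ∉ Set.range e} ≃ κ :=
    ((Equiv.ofInjective e e.injective).sumCongr (Equiv.refl _)).trans
      (Equiv.Set.sumCompl (Set.range e))
  let ψ : (ι ⊕ {k // k ∉ Set.range e} → α) ≃ (κ → α) := φ.arrowCongr (Equiv.refl α)
  have ψ_φ (w) (x) : ψ w (φ x) = w x := by simp [ψ]
  have ψ_e (w) (i) : ψ w (e i) = w (Sum.inl i) := ψ_φ w (Sum.inl i)
  rw [← ψ.hasSum_iff]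
  simpa only [Function.comp_def, ← φ.prod_comp, ψ_φ, ψ_e] using
    hasSum_prod_mul_comp_inl (κ := {k // k ∉ Set.range e}) hμ hμ_norm hg hg_norm

/-- The window of `k + 1` consecutive positions starting at `i`, in a word of length `m + k`
(which has exactly `m` such windows). -/
def window {m : ℕ} (k : ℕ) (i : Fin m) : Fin (k + 1) ↪ Fin (m + k) where
  toFun j := ⟨i + j, by omega⟩
  inj' j j' h := by simpa [Fin.ext_iff] using h

theorem hasSum_prod_mul_sum_window {k : ℕ} (m : ℕ) (hμ : HasSum μ 1)
    (hμ_norm : Summable fun a => ‖μ a‖) {g : (Fin (k + 1) → α) → R} {s : R}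
    (hg : HasSum (fun u => (∏ j, μ (u j)) * g u) s)
    (hg_norm : Summable fun u => ‖(∏ j, μ (u j)) * g u‖) :
    HasSum (fun w : Fin (m + k) → α => (∏ j, μ (w j)) * ∑ i : Fin m, g (w ∘ window k i))
      (m * s) := by
  simpa [Finset.mul_sum] using hasSum_sum (s := Finset.univ) fun (i : Fin m) _ =>
    hasSum_prod_mul_comp_embedding (window k i) hμ hμ_norm hg hg_norm

end IndependentLetters

section SymmetricValleys

/-- The three-letter word `u` is a symmetric valley. -/
def IsSymmValley (u : Fin 3 → ℕ) : Prop :=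
  u 1 < u 0 ∧ u 0 = u 2

instance : DecidablePred IsSymmValley :=
  fun u => inferInstanceAs (Decidable (u 1 < u 0 ∧ u 0 = u 2))

theorem getD_ofFn_window {m : ℕ} (w : Fin (m + 2) → ℕ) (i : Fin m) (j : Fin 3) :
    (List.ofFn w).getD (i + j) 0 = w (window 2 i j) := by
  rw [List.getD_eq_getElem _ _ (by rw [List.length_ofFn]; omega), List.getElem_ofFn]
  rfl

theorem svL_ofFn {m : ℕ} (w : Fin (m + 2) → ℕ) :
    svL (List.ofFn w) = ∑ i : Fin m, if IsSymmValley (w ∘ window 2 i) then 1 else 0 := by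
  rw [svL, symValleyIdx, Finset.card_filter, List.length_ofFn, Finset.sum_range_succ,
    Finset.sum_range_succ, if_neg (by omega), if_neg (by omega), add_zero, add_zero,
    Finset.sum_range]
  refine Finset.sum_congr rfl fun i _ => if_congr ?_ rfl rfl
  have h0 : (List.ofFn w).getD i 0 = w (window 2 i 0) := getD_ofFn_window w i 0
  have h1 : (List.ofFn w).getD (i + 1) 0 = w (window 2 i 1) := getD_ofFn_window w i 1
  have h2 : (List.ofFn w).getD (i + 2) 0 = w (window 2 i 2) := getD_ofFn_window w i 2
  rw [h0, h1, h2]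
  exact and_iff_right (by omega)

end SymmetricValleys

section GeometricLetters

variable {𝕜 : Type*} [NormedField 𝕜] {q : 𝕜}

theorem one_sub_ne_zero_of_norm_lt_one (hq : ‖q‖ < 1) : 1 - q ≠ 0 :=
  sub_ne_zero.2 fun h => by simp [← h] at hq

/-- The probability `p * q ^ (a - 1)` of the letter `a` under the geometric distribution with
failure parameter `q`, where `p = 1 - q`. -/
def geometricWeight (q : 𝕜) (a : ℕ+) : 𝕜 :=
  (1 - q) * q ^ ((a : ℕ) - 1)

theorem hasSum_geometricWeight (hq : ‖q‖ < 1) : HasSum (geometricWeight q) 1 := by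
  rw [← Equiv.pnatEquivNat.symm.hasSum_iff]
  have h := (hasSum_geometric_of_norm_lt_one hq).mul_left (1 - q)
  rw [mul_inv_cancel₀ (one_sub_ne_zero_of_norm_lt_one hq)] at h
  simpa [Function.comp_def, geometricWeight] using h

theorem summable_norm_geometricWeight (hq : ‖q‖ < 1) :
    Summable fun a => ‖geometricWeight q a‖ := by
  rw [← Equiv.pnatEquivNat.symm.summable_iff]
  simpa [Function.comp_def, geometricWeight] using
    (summable_norm_geometric_of_norm_lt_one hq).mul_left ‖1 - q‖

/-- The symmetric valley of depth `d + 1` and bottom `b + 1`, where `x = (d, b)`. -/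
def symmValley (x : ℕ × ℕ) : Fin 3 → ℕ+ :=
  ![(x.1 + x.2 + 1).succPNat, x.2.succPNat, (x.1 + x.2 + 1).succPNat]

theorem coe_symmValley_zero (x : ℕ × ℕ) : (symmValley x 0 : ℕ) = x.1 + x.2 + 1 + 1 := rfl

theorem coe_symmValley_one (x : ℕ × ℕ) : (symmValley x 1 : ℕ) = x.2 + 1 := rfl

theorem coe_symmValley_two (x : ℕ × ℕ) : (symmValley x 2 : ℕ) = x.1 + x.2 + 1 + 1 := rfl

theorem symmValley_injective : Function.Injective symmValley := by
  intro x y h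
  have h0 : x.1 + x.2 + 1 + 1 = y.1 + y.2 + 1 + 1 := congrArg PNat.val (congrFun h 0)
  have h1 : x.2 + 1 = y.2 + 1 := congrArg PNat.val (congrFun h 1)
  ext <;> omega

theorem mem_range_symmValley {u : Fin 3 → ℕ+} :
    u ∈ Set.range symmValley ↔ IsSymmValley fun j => (u j : ℕ) := by
  constructor
  · rintro ⟨x, rfl⟩
    have hlt : (symmValley x 1 : ℕ) < symmValley x 0 := by
      rw [coe_symmValley_zero, coe_symmValley_one]
      omega
    exact ⟨hlt, rfl⟩
  · rintro ⟨hlt : (u 1 : ℕ) < u 0, heq : (u 0 : ℕ) = u 2⟩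
    have hpos := (u 1).pos
    let x : ℕ × ℕ := ((u 0 : ℕ) - u 1 - 1, (u 1 : ℕ) - 1)
    have h0 : x.1 + x.2 + 1 + 1 = u 0 := by grind
    have h1 : x.2 + 1 = u 1 := by grind
    refine ⟨x, funext fun j => PNat.coe_injective ?_⟩
    fin_cases j
    exacts [h0, h1, h0.trans heq]

theorem prod_geometricWeight_symmValley (q : 𝕜) (x : ℕ × ℕ) :
    ∏ j, geometricWeight q (symmValley x j) =
      (1 - q) ^ 3 * q ^ 2 * ((q ^ 2) ^ x.1 * (q ^ 3) ^ x.2) := by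
  simp only [Fin.prod_univ_three, geometricWeight, coe_symmValley_zero, coe_symmValley_one,
    coe_symmValley_two, Nat.add_sub_cancel]
  ring

theorem hasSum_isSymmValley (hq : ‖q‖ < 1) :
    HasSum (fun u : Fin 3 → ℕ+ => (∏ j, geometricWeight q (u j)) *
      if IsSymmValley fun j => (u j : ℕ) then 1 else 0)
    ((1 - q) ^ 2 * (1 / (1 - q ^ 2) - 1 / (1 - q ^ 3))) := by
  have hpow {k : ℕ} (hk : k ≠ 0) : ‖q ^ k‖ < 1 := by
    rw [norm_pow]
    exact pow_lt_one₀ (norm_nonneg q) hq hk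
  have hq2 : ‖q ^ 2‖ < 1 := hpow two_ne_zero
  have hq3 : ‖q ^ 3‖ < 1 := hpow three_ne_zero
  have hgeom := hasSum_mul_of_summable_norm (R := 𝕜)
    (hasSum_geometric_of_norm_lt_one hq2) (summable_norm_geometric_of_norm_lt_one hq2)
    (hasSum_geometric_of_norm_lt_one hq3) (summable_norm_geometric_of_norm_lt_one hq3)
  have hvalue : (1 - q) ^ 3 * q ^ 2 * ((1 - q ^ 2)⁻¹ * (1 - q ^ 3)⁻¹) =
      (1 - q) ^ 2 * (1 / (1 - q ^ 2) - 1 / (1 - q ^ 3)) := by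
    have := one_sub_ne_zero_of_norm_lt_one hq2
    have := one_sub_ne_zero_of_norm_lt_one hq3
    field_simp
    ring
  rw [← hvalue, ← symmValley_injective.hasSum_iff]
  · have hvalley (x) : IsSymmValley fun j => (symmValley x j : ℕ) :=
      mem_range_symmValley.1 (Set.mem_range_self x)
    simpa [Function.comp_def, prod_geometricWeight_symmValley, hvalley] using
      hgeom.mul_left ((1 - q) ^ 3 * q ^ 2)
  · intro u hu
    rw [mem_range_symmValley] at hu
    simp [hu]

end GeometricLetters

theorem hasSum_wordP_mul_svL {q : ℝ} (hq : ‖q‖ < 1) (m : ℕ) :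
    HasSum (fun w : Fin (m + 2) → ℕ+ =>
        wordP (1 - q) q w * (svL (List.ofFn fun i => (w i : ℕ)) : ℝ))
      (m * ((1 - q) ^ 2 * (1 / (1 - q ^ 2) - 1 / (1 - q ^ 3)))) := by
  have hvalley := hasSum_isSymmValley (𝕜 := ℝ) hq
  have hsum := hasSum_prod_mul_sum_window m (hasSum_geometricWeight (𝕜 := ℝ) hq)
    (summable_norm_geometricWeight (𝕜 := ℝ) hq) hvalley hvalley.summable.norm
  simp only [svL_ofFn, Nat.cast_sum, Nat.cast_ite, Nat.cast_one, Nat.cast_zero]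
  exact hsum

theorem expected_symmetric_valleys_general (p q : ℝ) (hpq : q = 1 - p) (hq : |q| < 1)
    (n : ℕ) (hn : 2 ≤ n) :
    Summable (fun w : Fin n → ℕ+ =>
      wordP p q w * (svL (List.ofFn fun i => (w i : ℕ)) : ℝ)) ∧
    ∑' w : Fin n → ℕ+, wordP p q w * (svL (List.ofFn fun i => (w i : ℕ)) : ℝ)
      = p ^ 2 * (1 / (1 - q ^ 2) - 1 / (1 - q ^ 3)) * ((n : ℝ) - 2) := by
  obtain rfl : p = 1 - q := by linarith
  obtain ⟨m, rfl⟩ := Nat.exists_eq_add_of_le' hn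
  have h := hasSum_wordP_mul_svL hq m
  refine ⟨h.summable, h.tsum_eq.trans ?_⟩
  push_cast
  ring

/-- For `0 < p ≤ 1`, `q = 1 − p`, and `n ≥ 2`, the expected number of symmetric valleys
in a sample of `n` geometric random variables is `p²(1/(1−q²) − 1/(1−q³))(n−2)`; the sum
over all words converges (absolutely, as all terms are nonnegative). -/
theorem expected_symmetric_valleys (p q : ℝ) (hp : 0 < p) (hp1 : p ≤ 1) (hq : q = 1 - p)
    (n : ℕ) (hn : 2 ≤ n) :
    Summable (fun w : Fin n → ℕ+ =>
      wordP p q w * (svL (List.ofFn fun i => (w i : ℕ)) : ℝ)) ∧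
    ∑' w : Fin n → ℕ+, wordP p q w * (svL (List.ofFn fun i => (w i : ℕ)) : ℝ)
      = p ^ 2 * (1 / (1 - q ^ 2) - 1 / (1 - q ^ 3)) * ((n : ℝ) - 2) := by
  exact expected_symmetric_valleys_general p q hq (abs_lt.2 ⟨by linarith, by linarith⟩) n hn
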